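/- arXiv:1507.08695 — 2 statements merged into one kernel-verified Lean document; each statement's English description precedes it below -/
import Mathlib

section
/- Let X be a Banach space, let P₁, P₂ be projections on X, and let P₁₂ be a compatible corner projection for (P₁,P₂). Set β = max{‖P₁‖, ‖P₂‖} and c = cos∠(P₁,P₂). If c < 1, then for every v ∈ X one has max{‖(P₁ − P₁₂)v‖, ‖(P₂ − P₁₂)v‖} ≤ ((1+β)/(1−c))·‖(P₁ − P₂)v‖. -/
/-!
Put `E = P₁ - P₁₂`, which is idempotent. Since `P₂ (E v) = (P₂ E) (E v)` has norm at most
`c * ‖E v‖`, the operator `1 - P₂` is bounded below by `1 - c` on the range of `E`. On the other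
hand `1 - P₂` kills both `P₁₂` and `P₂`, so `(1 - P₂) E = (1 - P₂) (P₁ - P₂)`. The bound for
`P₂ - P₁₂` follows by exchanging the two projections.
-/

theorem one_sub_mul_sub_eq_of_mul_eq {A : Type*} [Ring A] {q r : A}
    (hq : IsIdempotentElem q) (hqr : q * r = r) (p : A) :
    (1 - q) * (p - r) = (1 - q) * (p - q) := by
  have hr : (1 - q) * r = 0 := by rw [sub_mul, one_mul, hqr, sub_self]
  rw [mul_sub, mul_sub, hr, hq.one_sub_mul_self]

theorem comp_eq_right_of_range_subset {S M N : Type*} [Semiring S]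
    [AddCommMonoid M] [Module S M] [TopologicalSpace M]
    [AddCommMonoid N] [Module S N] [TopologicalSpace N]
    {P : M →L[S] M} {R : N →L[S] M} (hP : IsIdempotentElem P)
    (hrange : Set.range R ⊆ Set.range P) : P ∘L R = R :=
  ContinuousLinearMap.coe_injective <|
    (LinearMap.IsIdempotentElem.comp_eq_right_iff
      (ContinuousLinearMap.IsIdempotentElem.toLinearMap hP) R.toLinearMap).mpr hrange

section Projection

variable {𝕜 X : Type*} [NontriviallyNormedField 𝕜] [SeminormedAddCommGroup X] [NormedSpace 𝕜 X]

theorem norm_one_sub_le_one_add_norm (T : X →L[𝕜] X) : ‖1 - T‖ ≤ 1 + ‖T‖ :=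
  (norm_sub_le 1 T).trans (add_le_add_left ContinuousLinearMap.norm_id_le ‖T‖)

theorem one_sub_norm_comp_mul_norm_apply_le {E : X →L[𝕜] X} (hE : IsIdempotentElem E)
    (Q : X →L[𝕜] X) (v : X) :
    (1 - ‖Q ∘L E‖) * ‖E v‖ ≤ ‖(1 - Q) (E v)‖ := by
  have hfix : E (E v) = E v := DFunLike.congr_fun hE v
  have hQ : ‖Q (E v)‖ ≤ ‖Q ∘L E‖ * ‖E v‖ := by
    simpa only [ContinuousLinearMap.comp_apply, hfix] using (Q ∘L E).le_opNorm (E v)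
  have htri : ‖E v‖ - ‖Q (E v)‖ ≤ ‖(1 - Q) (E v)‖ := norm_sub_norm_le (E v) (Q (E v))
  linarith

theorem norm_sub_apply_le_of_norm_comp_sub_lt_one {P Q R : X →L[𝕜] X}
    (hP : IsIdempotentElem P) (hQ : IsIdempotentElem Q) (hR : IsIdempotentElem R)
    (hPR : P ∘L R = R) (hRP : R ∘L P = R) (hQR : Q ∘L R = R)
    (hlt : ‖Q ∘L (P - R)‖ < 1) (v : X) :
    ‖(P - R) v‖ ≤ ‖1 - Q‖ / (1 - ‖Q ∘L (P - R)‖) * ‖(P - Q) v‖ := by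
  have hE : IsIdempotentElem (P - R) := hR.sub hP hRP hPR
  have hfactor : (1 - Q) ((P - R) v) = (1 - Q) ((P - Q) v) :=
    DFunLike.congr_fun (one_sub_mul_sub_eq_of_mul_eq hQ hQR P) v
  rw [div_mul_eq_mul_div, le_div_iff₀' (sub_pos.mpr hlt)]
  calc (1 - ‖Q ∘L (P - R)‖) * ‖(P - R) v‖
      ≤ ‖(1 - Q) ((P - R) v)‖ := one_sub_norm_comp_mul_norm_apply_le hE Q v
    _ = ‖(1 - Q) ((P - Q) v)‖ := by rw [hfactor]
    _ ≤ ‖1 - Q‖ * ‖(P - Q) v‖ := (1 - Q).le_opNorm _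

theorem norm_sub_apply_le_one_add_div_one_sub_mul {P Q R : X →L[𝕜] X}
    (hP : IsIdempotentElem P) (hQ : IsIdempotentElem Q) (hR : IsIdempotentElem R)
    (hrange : Set.range R ⊆ Set.range P ∩ Set.range Q) (hRP : R ∘L P = R) {β c : ℝ}
    (hβ : ‖Q‖ ≤ β) (hcos : ‖Q ∘L (P - R)‖ ≤ c) (hc : c < 1) (v : X) :
    ‖(P - R) v‖ ≤ (1 + β) / (1 - c) * ‖(P - Q) v‖ := by
  obtain ⟨hPrange, hQrange⟩ := Set.subset_inter_iff.mp hrange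
  have hPR : P ∘L R = R := comp_eq_right_of_range_subset hP hPrange
  have hQR : Q ∘L R = R := comp_eq_right_of_range_subset hQ hQrange
  have hnorm : ‖1 - Q‖ ≤ 1 + β := (norm_one_sub_le_one_add_norm Q).trans (by gcongr)
  have hβ_nonneg : 0 ≤ 1 + β := (norm_nonneg (1 - Q)).trans hnorm
  have hconst : ‖1 - Q‖ / (1 - ‖Q ∘L (P - R)‖) ≤ (1 + β) / (1 - c) :=
    div_le_div₀ hβ_nonneg hnorm (sub_pos.mpr hc) (sub_le_sub_left hcos 1)
  calc ‖(P - R) v‖ ≤ ‖1 - Q‖ / (1 - ‖Q ∘L (P - R)‖) * ‖(P - Q) v‖ :=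
        norm_sub_apply_le_of_norm_comp_sub_lt_one hP hQ hR hPR hRP hQR (hcos.trans_lt hc) v
    _ ≤ (1 + β) / (1 - c) * ‖(P - Q) v‖ := mul_le_mul_of_nonneg_right hconst (norm_nonneg _)

theorem corner_projection_difference_bound_general {P₁ P₂ P₁₂ : X →L[𝕜] X}
    (hP₁ : IsIdempotentElem P₁) (hP₂ : IsIdempotentElem P₂) (hP₁₂ : IsIdempotentElem P₁₂)
    (hrange : Set.range P₁₂ ⊆ Set.range P₁ ∩ Set.range P₂)
    (hc₁ : P₁₂ ∘L P₁ = P₁₂) (hc₂ : P₁₂ ∘L P₂ = P₁₂) {β c : ℝ}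
    (hβ : max ‖P₁‖ ‖P₂‖ ≤ β)
    (hcos : max ‖P₁ ∘L (P₂ - P₁₂)‖ ‖P₂ ∘L (P₁ - P₁₂)‖ ≤ c)
    (hc : c < 1) (v : X) :
    max ‖(P₁ - P₁₂) v‖ ‖(P₂ - P₁₂) v‖ ≤ (1 + β) / (1 - c) * ‖(P₁ - P₂) v‖ := by
  obtain ⟨hβ₁, hβ₂⟩ := max_le_iff.mp hβ
  obtain ⟨hcos₁, hcos₂⟩ := max_le_iff.mp hcos
  have hswap : ‖(P₁ - P₂) v‖ = ‖(P₂ - P₁) v‖ := norm_sub_rev (P₁ v) (P₂ v)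
  refine max_le ?_ ?_
  · exact norm_sub_apply_le_one_add_div_one_sub_mul hP₁ hP₂ hP₁₂ hrange hc₁ hβ₂ hcos₂ hc v
  · rw [Set.inter_comm] at hrange
    rw [hswap]
    exact norm_sub_apply_le_one_add_div_one_sub_mul hP₂ hP₁ hP₁₂ hrange hc₂ hβ₁ hcos₁ hc v

end Projection

/-- If `P₁, P₂` are projections on a Banach space with a compatible corner projection `P₁₂`
(for which `cos∠(P₁,P₂) = max{‖P₁∘(P₂−P₁₂)‖, ‖P₂∘(P₁−P₁₂)‖} < 1`), then for every `v`,
`max{‖(P₁−P₁₂)v‖, ‖(P₂−P₁₂)v‖} ≤ ((1+β)/(1−c))·‖(P₁−P₂)v‖`, where `β = max{‖P₁‖,‖P₂‖}`. -/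
theorem corner_projection_difference_bound
    {X : Type*} [NormedAddCommGroup X] [NormedSpace ℂ X] [CompleteSpace X]
    (P₁ P₂ P₁₂ : X →L[ℂ] X)
    (hP₁ : P₁ ∘L P₁ = P₁) (hP₂ : P₂ ∘L P₂ = P₂) (hP₁₂ : P₁₂ ∘L P₁₂ = P₁₂)
    (hrange : Set.range P₁₂ = Set.range P₁ ∩ Set.range P₂)
    (hc₁ : P₁₂ ∘L P₁ = P₁₂) (hc₂ : P₁₂ ∘L P₂ = P₁₂)
    (β c : ℝ)
    (hβ : β = max ‖P₁‖ ‖P₂‖)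
    (hcos : c = max ‖P₁ ∘L (P₂ - P₁₂)‖ ‖P₂ ∘L (P₁ - P₁₂)‖)
    (hc : c < 1) :
    ∀ v : X, max ‖(P₁ - P₁₂) v‖ ‖(P₂ - P₁₂) v‖ ≤ (1 + β) / (1 - c) * ‖(P₁ - P₂) v‖ :=
  corner_projection_difference_bound_general hP₁ hP₂ hP₁₂ hrange.subset hc₁ hc₂ hβ.ge hcos.ge hc
end

section
/- Let X be a Banach space, let N ≥ 2, let P₁,…,P_N be projections on X, and suppose that for each pair 1 ≤ i < j ≤ N there exists a compatible corner projection P_{i,j} for (P_i,P_j). Set T = (P₁ + ⋯ + P_N)/N. Suppose γ ≥ 0 and β ≥ 0 are constants such that cos∠(P_i,P_j) ≤ γ (computed relative to P_{i,j}) for all 1 ≤ i < j ≤ N, ‖P_i‖ ≤ β for all i, and such that (8N−11)·γ < 1 and (β − 1)·(N − 2 + (3N−4)·γ) < 1 − (8N−11)·γ. Then there exist constants r with 0 ≤ r < 1 and C ≥ 0 and a bounded linear operator T^∞ on X such that ‖T^∞ − Tⁿ‖ ≤ C·rⁿ for every n ∈ ℕ, T^∞ is a projection, and range(T^∞) = ⋂_{i=1}^N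 range(P_i). -/
/-!
Let `T` be the average of the projections `P i`. If `s` is a compatible corner of `p` and `q`,
then `a = p q - s` and `b = q p - s` satisfy `a = a b - a (p - q)` and symmetrically for `b`, so
`‖a‖, ‖b‖ ≤ γ` forces `‖⁅p, q⁆ S‖ ≤ 2γ / (1 - γ) ‖(p - q) S‖` for every `S`: two projections whose
angle has a small cosine commute approximately, the better the closer they are on the range of `S`.
Commuting `P k` past `P i - P j` therefore shows that left multiplication by `T` contracts
`max ‖(P i - P j) S‖`, so `(P i - P j) T ^ n → 0` geometrically. As `P k ^ 2 = P k`, the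
difference `T ^ (n + 2) - T ^ (n + 1)` is the average of the `P k (T - P k) T ^ n`, so `T ^ n`
converges geometrically, and its limit `L` satisfies `P i L = L` for all `i`.
-/

open Finset

section Average

/-- The arithmetic mean of a finite family, with the division carried out in `𝕜`. -/
def average (𝕜 : Type*) {ι E : Type*} [Fintype ι] [DivisionRing 𝕜] [AddCommMonoid E] [Module 𝕜 E]
    (f : ι → E) : E :=
  (Fintype.card ι : 𝕜)⁻¹ • ∑ i, f i

variable {𝕜 ι E A : Type*} [Fintype ι]

theorem average_const [DivisionRing 𝕜] [CharZero 𝕜] [AddCommMonoid E] [Module 𝕜 E] [Nonempty ι]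
    (x : E) : average 𝕜 (fun _ : ι ↦ x) = x := by
  rw [average, sum_const, card_univ, ← Nat.cast_smul_eq_nsmul 𝕜,
    inv_smul_smul₀ (Nat.cast_ne_zero.2 Fintype.card_ne_zero)]

theorem average_sub [DivisionRing 𝕜] [AddCommGroup E] [Module 𝕜 E] (f g : ι → E) :
    average 𝕜 (fun i ↦ f i - g i) = average 𝕜 f - average 𝕜 g := by
  simp only [average, sum_sub_distrib, smul_sub]

theorem average_mul [DivisionRing 𝕜] [NonUnitalNonAssocSemiring A] [Module 𝕜 A]
    [IsScalarTower 𝕜 A A] (f : ι → A) (a : A) :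
    average 𝕜 f * a = average 𝕜 fun i ↦ f i * a := by
  simp only [average, smul_mul_assoc, sum_mul]

theorem mul_average [DivisionRing 𝕜] [NonUnitalNonAssocSemiring A] [Module 𝕜 A]
    [SMulCommClass 𝕜 A A] (a : A) (f : ι → A) :
    a * average 𝕜 f = average 𝕜 fun i ↦ a * f i := by
  simp only [average, mul_smul_comm, mul_sum]

theorem average_apply [Field 𝕜] [AddCommMonoid E] [Module 𝕜 E] [TopologicalSpace E]
    [ContinuousAdd E] [ContinuousConstSMul 𝕜 E]
    (P : ι → E →L[𝕜] E) (x : E) : average 𝕜 P x = average 𝕜 fun i ↦ P i x := by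
  simp only [average, smul_apply, _root_.sum_apply]

variable [RCLike 𝕜] [SeminormedAddCommGroup E] [NormedSpace 𝕜 E]

theorem norm_average (f : ι → E) : ‖average 𝕜 f‖ = ‖∑ i, f i‖ / Fintype.card ι := by
  rw [average, norm_smul, norm_inv, RCLike.norm_natCast, inv_mul_eq_div]

theorem norm_average_le [Nonempty ι] {f : ι → E} {C : ℝ} (hf : ∀ i, ‖f i‖ ≤ C) :
    ‖average 𝕜 f‖ ≤ C := by
  rw [norm_average, div_le_iff₀' (Nat.cast_pos.2 Fintype.card_pos)]
  simpa using norm_sum_le_of_le univ fun i _ ↦ hf i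

end Average

section Corner

variable {A : Type*}

/-- The algebraic content of "`s` is a compatible corner projection for `(p, q)`": for bounded
operators, `p * s = s` and `q * s = s` say that the range of `s` lies in those of `p` and `q`. -/
structure IsCompatibleCorner [Mul A] (p q s : A) : Prop where
  isIdempotentElem : IsIdempotentElem s
  left_mul : p * s = s
  right_mul : q * s = s
  mul_left : s * p = s
  mul_right : s * q = s

/-- The cosine of the angle between `p` and `q` relative to `s`. -/
def cosAngle [NonUnitalNormedRing A] (p q s : A) : ℝ :=
  max ‖p * (q - s)‖ ‖q * (p - s)‖

theorem cosAngle_comm [NonUnitalNormedRing A] (p q s : A) : cosAngle p q s = cosAngle q p s :=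
  max_comm _ _

namespace IsCompatibleCorner

theorem symm [Mul A] {p q s : A} (h : IsCompatibleCorner p q s) : IsCompatibleCorner q p s :=
  ⟨h.isIdempotentElem, h.right_mul, h.left_mul, h.mul_right, h.mul_left⟩

theorem mul_sub_eq_mul_mul_sub_mul [NonUnitalRing A] {p q s : A} (h : IsCompatibleCorner p q s)
    (hq : IsIdempotentElem q) :
    p * (q - s) = p * (q - s) * (q * (p - s)) - p * (q - s) * (p - q) := by
  have hss : s * s = s := h.isIdempotentElem
  have hqq : q * q = q := hq
  have hmul : p * (q - s) * (q * (p - s)) = p * q * p - s := by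
    rw [mul_sub p, mul_sub q, h.left_mul, h.right_mul, sub_mul, mul_sub, mul_sub,
      mul_assoc p q (q * p), ← mul_assoc q q p, hqq, ← mul_assoc s, h.mul_right, h.mul_left,
      mul_assoc p q s, h.right_mul, h.left_mul, hss, sub_self, sub_zero, mul_assoc]
  have hmul_sub : p * (q - s) * (p - q) = p * q * p - p * q := by
    rw [mul_sub p, h.left_mul, sub_mul, mul_sub, mul_sub, h.mul_left, h.mul_right, sub_self,
      sub_zero, mul_assoc p q q, hqq]
  rw [hmul, hmul_sub, mul_sub, h.left_mul]
  abel

variable [NonUnitalNormedRing A] {p q s : A} {γ : ℝ}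

theorem norm_mul_sub_mul_le (h : IsCompatibleCorner p q s) (hq : IsIdempotentElem q)
    (hγ : ‖p * (q - s)‖ ≤ γ) (S : A) :
    ‖p * (q - s) * S‖ ≤ γ * (‖q * (p - s) * S‖ + ‖(p - q) * S‖) := by
  have hγ₀ : 0 ≤ γ := (norm_nonneg _).trans hγ
  calc ‖p * (q - s) * S‖
      = ‖p * (q - s) * (q * (p - s) * S - (p - q) * S)‖ := by
        conv_lhs => rw [h.mul_sub_eq_mul_mul_sub_mul hq]
        simp only [sub_mul, mul_sub, mul_assoc]
    _ ≤ ‖p * (q - s)‖ * ‖q * (p - s) * S - (p - q) * S‖ := norm_mul_le _ _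
    _ ≤ γ * (‖q * (p - s) * S‖ + ‖(p - q) * S‖) := by gcongr; exact norm_sub_le _ _

theorem norm_lie_mul_le (h : IsCompatibleCorner p q s) (hp : IsIdempotentElem p)
    (hq : IsIdempotentElem q) (hcos : cosAngle p q s ≤ γ) (hγ : γ < 1) (S : A) :
    ‖⁅p, q⁆ * S‖ ≤ 2 * γ / (1 - γ) * ‖(p - q) * S‖ := by
  obtain ⟨hpq, hqp⟩ := max_le_iff.1 hcos
  have ha := h.norm_mul_sub_mul_le hq hpq S
  have hb := h.symm.norm_mul_sub_mul_le hp hqp S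
  rw [← neg_sub p q, neg_mul, norm_neg] at hb
  have hlie : ⁅p, q⁆ * S = p * (q - s) * S - q * (p - s) * S := by
    rw [Ring.lie_def, ← sub_mul, mul_sub p, mul_sub q, h.left_mul, h.right_mul,
      sub_sub_sub_cancel_right]
  rw [div_mul_eq_mul_div, le_div_iff₀ (by linarith), hlie]
  calc ‖p * (q - s) * S - q * (p - s) * S‖ * (1 - γ)
      ≤ (‖p * (q - s) * S‖ + ‖q * (p - s) * S‖) * (1 - γ) :=
        mul_le_mul_of_nonneg_right (norm_sub_le _ _) (by linarith)
    _ ≤ 2 * γ * ‖(p - q) * S‖ := by linarith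

end IsCompatibleCorner

end Corner

section Contraction

variable {𝕜 ι A : Type*}

theorem sub_mul_eq_mul_sub_add_lie [NonUnitalRing A] (p q r : A) :
    (p - q) * r = r * (p - q) + ⁅p, r⁆ - ⁅q, r⁆ := by
  simp only [Ring.lie_def, sub_mul, mul_sub]
  abel

theorem norm_sub_mul_mul_le [NonUnitalNormedRing A] {p q r S : A} {β c e : ℝ} (hr : ‖r‖ ≤ β)
    (hpr : ‖⁅p, r⁆ * S‖ ≤ c) (hqr : ‖⁅q, r⁆ * S‖ ≤ c) (hpq : ‖(p - q) * S‖ ≤ e) :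
    ‖(p - q) * r * S‖ ≤ β * e + 2 * c :=
  calc ‖(p - q) * r * S‖
      = ‖r * ((p - q) * S) + ⁅p, r⁆ * S - ⁅q, r⁆ * S‖ := by
        rw [sub_mul_eq_mul_sub_add_lie, sub_mul, add_mul, mul_assoc]
    _ ≤ β * e + c + c :=
        norm_sub_le_of_le (norm_add_le_of_le (norm_mul_le_of_le hr hpq) hpr) hqr
    _ = β * e + 2 * c := by ring

theorem sub_mul_sum_eq [NonUnitalRing A] [Fintype ι] [DecidableEq ι] {p : ι → A} {i j : ι}
    (hi : IsIdempotentElem (p i)) (hj : IsIdempotentElem (p j)) (hij : i ≠ j) :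
    (p i - p j) * ∑ k, p k = p i - p j + ⁅p i, p j⁆ + ∑ k ∈ {i, j}ᶜ, (p i - p j) * p k := by
  rw [← sum_add_sum_compl {i, j}, sum_pair hij, mul_add, mul_sum, sub_mul, mul_add, mul_add,
    hi.eq, hj.eq, Ring.lie_def]
  abel

/-- The factor by which averaging `n` projections of norm at most `β`, with pairwise cosines at
most `γ`, contracts the differences of these projections; only meaningful for `γ < 1`. -/
noncomputable def contractionRate (n β γ : ℝ) : ℝ :=
  (1 + (n - 2) * β + (2 * n - 3) * (2 * γ / (1 - γ))) / n

theorem contractionRate_pos {n β γ : ℝ} (hn : 2 ≤ n) (hβ : 0 ≤ β) (hγ₀ : 0 ≤ γ) (hγ : γ < 1) :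
    0 < contractionRate n β γ := by
  have hnorm : 0 ≤ (n - 2) * β := mul_nonneg (by linarith) hβ
  have hangle : 0 ≤ (2 * n - 3) * (2 * γ / (1 - γ)) :=
    mul_nonneg (by linarith) (div_nonneg (by linarith) (by linarith))
  exact div_pos (by linarith) (by linarith)

theorem contractionRate_lt_one_iff {n β γ : ℝ} (hn : 0 < n) (hγ : γ < 1) :
    contractionRate n β γ < 1 ↔ (β - 1) * ((n - 2) * (1 - γ)) < 1 - (4 * n - 5) * γ := by
  have hγ₁ : 0 < 1 - γ := by linarith
  have hclear : (n - (1 + (n - 2) * β + (2 * n - 3) * (2 * γ / (1 - γ)))) * (1 - γ)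
      = 1 - (4 * n - 5) * γ - (β - 1) * ((n - 2) * (1 - γ)) := by
    field_simp
    ring
  rw [contractionRate, div_lt_one hn, ← sub_pos, ← mul_pos_iff_of_pos_right hγ₁, hclear, sub_pos]

theorem contractionRate_lt_one {n β γ : ℝ} (hn : 2 ≤ n) (hγ₀ : 0 ≤ γ) (hγ : γ < 1)
    (hγsmall : (8 * n - 11) * γ < 1)
    (hβsmall : (β - 1) * (n - 2 + (3 * n - 4) * γ) < 1 - (8 * n - 11) * γ) :
    contractionRate n β γ < 1 := by
  have hmono : (4 * n - 5) * γ ≤ (8 * n - 11) * γ := by gcongr ?_ * γ; linarith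
  rw [contractionRate_lt_one_iff (by linarith) hγ]
  obtain hβ | hβ := le_total β 1
  · have hle : (β - 1) * ((n - 2) * (1 - γ)) ≤ 0 :=
      mul_nonpos_of_nonpos_of_nonneg (by linarith) (mul_nonneg (by linarith) (by linarith))
    linarith
  · have hle : (β - 1) * ((n - 2) * (1 - γ)) ≤ (β - 1) * (n - 2 + (3 * n - 4) * γ) :=
      mul_le_mul_of_nonneg_left (by nlinarith) (by linarith)
    linarith

variable [Fintype ι] [RCLike 𝕜] [NormedRing A] [NormedAlgebra 𝕜 A] {p : ι → A} {S : A} {β c e : ℝ}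

theorem norm_sub_mul_average_mul_le (hp : ∀ i, IsIdempotentElem (p i)) (hβ : ∀ i, ‖p i‖ ≤ β)
    (hlie : Pairwise fun i j ↦ ‖⁅p i, p j⁆ * S‖ ≤ c) {i j : ι} (hij : i ≠ j)
    (he : ‖(p i - p j) * S‖ ≤ e) :
    ‖(p i - p j) * (average 𝕜 p * S)‖
      ≤ (e + c + (Fintype.card ι - 2) * (β * e + 2 * c)) / Fintype.card ι := by
  classical
  have hcard : (#({i, j}ᶜ : Finset ι) : ℝ) = Fintype.card ι - 2 := by
    rw [card_compl, card_pair hij, Nat.cast_sub (card_pair hij ▸ card_le_univ _), Nat.cast_two]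
  have hrest : ‖∑ k ∈ {i, j}ᶜ, (p i - p j) * p k * S‖
      ≤ (Fintype.card ι - 2) * (β * e + 2 * c) := by
    rw [← hcard, ← nsmul_eq_mul, ← sum_const]
    refine norm_sum_le_of_le _ fun k hk ↦ ?_
    obtain ⟨hki, hkj⟩ : k ≠ i ∧ k ≠ j := by simpa using hk
    exact norm_sub_mul_mul_le (hβ k) (hlie hki.symm) (hlie hkj.symm) he
  rw [← mul_assoc, mul_average, average_mul, norm_average, ← sum_mul, ← mul_sum,
    sub_mul_sum_eq (hp i) (hp j) hij, add_mul, add_mul, sum_mul]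
  gcongr
  exact norm_add₃_le.trans (add_le_add (add_le_add he (hlie hij)) hrest)

theorem norm_sub_mul_average_pow_le {γ : ℝ} (hp : ∀ i, IsIdempotentElem (p i)) (hβ : ∀ i, ‖p i‖ ≤ β)
    (hcorner : Pairwise fun i j ↦ ∃ s, IsCompatibleCorner (p i) (p j) s ∧
      cosAngle (p i) (p j) s ≤ γ) (hγ₀ : 0 ≤ γ) (hγ : γ < 1) (n : ℕ) {i j : ι} (hij : i ≠ j) :
    ‖(p i - p j) * average 𝕜 p ^ n‖
      ≤ 2 * β * contractionRate (Fintype.card ι) β γ ^ n := by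
  set r := contractionRate (Fintype.card ι) β γ with hr
  induction n generalizing i j with
  | zero =>
    rw [pow_zero, pow_zero, mul_one, mul_one, two_mul]
    exact norm_sub_le_of_le (hβ i) (hβ j)
  | succ n ih =>
    have hlie : Pairwise fun i j ↦ ‖⁅p i, p j⁆ * average 𝕜 p ^ n‖
        ≤ 2 * γ / (1 - γ) * (2 * β * r ^ n) := fun i j hij ↦ by
      obtain ⟨s, hs, hcos⟩ := hcorner hij
      exact (hs.norm_lie_mul_le (hp i) (hp j) hcos hγ _).trans <|
        mul_le_mul_of_nonneg_left (ih hij) (div_nonneg (by linarith) (by linarith))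
    rw [pow_succ']
    refine (norm_sub_mul_average_mul_le hp hβ hlie hij (ih hij)).trans_eq ?_
    rw [pow_succ', hr, contractionRate]
    ring

end Contraction

section Convergence

open Filter Topology

theorem exists_dist_succ_le_geometric {α : Type*} [PseudoMetricSpace α] {u : ℕ → α} {K r : ℝ}
    (hr : 0 < r) (hu : ∀ n, dist (u (n + 1)) (u (n + 2)) ≤ K * r ^ n) :
    ∃ C, ∀ n, dist (u n) (u (n + 1)) ≤ C * r ^ n := by
  refine ⟨max (dist (u 0) (u 1)) (K / r), fun n ↦ ?_⟩
  cases n with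
  | zero => simp
  | succ n =>
    calc dist (u (n + 1)) (u (n + 2)) ≤ K * r ^ n := hu n
      _ = K / r * r ^ (n + 1) := by rw [pow_succ']; field_simp
      _ ≤ max (dist (u 0) (u 1)) (K / r) * r ^ (n + 1) := by gcongr; exact le_max_right _ _

variable {𝕜 ι A : Type*} [Fintype ι] [Nonempty ι] [RCLike 𝕜] [NormedRing A] [NormedAlgebra 𝕜 A]
  {p : ι → A} {β K r : ℝ}

theorem norm_average_sub_mul_le {S : A} (h : ∀ i j, ‖(p i - p j) * S‖ ≤ K) (j : ι) :
    ‖(average 𝕜 p - p j) * S‖ ≤ K := by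
  have : (average 𝕜 p - p j) * S = average 𝕜 fun i ↦ (p i - p j) * S := by
    rw [← average_mul, average_sub, average_const]
  exact this ▸ norm_average_le fun i ↦ h i j

theorem dist_average_pow_succ_le (hp : ∀ i, IsIdempotentElem (p i)) (hβ : ∀ i, ‖p i‖ ≤ β) {n : ℕ}
    (h : ∀ i j, ‖(p i - p j) * average 𝕜 p ^ n‖ ≤ K) :
    dist (average 𝕜 p ^ (n + 1)) (average 𝕜 p ^ (n + 2)) ≤ β * K := by
  set T := average 𝕜 p with hT
  have hterm (i : ι) : p i * ((T - p i) * T ^ n) = p i * (T ^ (n + 1) - T ^ n) := by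
    rw [pow_succ', sub_mul, mul_sub, mul_sub, ← mul_assoc (p i) (p i), (hp i).eq]
  have hdiff : T ^ (n + 2) - T ^ (n + 1) = average 𝕜 fun i ↦ p i * ((T - p i) * T ^ n) := by
    simp_rw [hterm]
    rw [← average_mul, ← hT, mul_sub, ← pow_succ', ← pow_succ']
  rw [dist_comm, dist_eq_norm, hdiff]
  exact norm_average_le fun i ↦ norm_mul_le_of_le (hβ i) (norm_average_sub_mul_le h i)

theorem mul_eq_of_tendsto_average_pow {L : A} (hL : Tendsto (average 𝕜 p ^ ·) atTop (𝓝 L))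
    (h : ∀ i j, Tendsto (fun n : ℕ ↦ (p i - p j) * average 𝕜 p ^ n) atTop (𝓝 0)) (i : ι) :
    p i * L = L := by
  have hall (j : ι) : p j * L = p i * L := by
    rw [← sub_eq_zero, ← sub_mul]
    exact tendsto_nhds_unique (hL.const_mul _) (h j i)
  have hTL : average 𝕜 p * L = L := by
    refine tendsto_nhds_unique (hL.const_mul _) ?_
    simpa only [← pow_succ'] using (tendsto_add_atTop_iff_nat 1).2 hL
  simpa only [average_mul, hall, average_const] using hTL

theorem exists_average_pow_geometric_limit [CompleteSpace A] (hp : ∀ i, IsIdempotentElem (p i))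
    (hr₀ : 0 < r) (hr₁ : r < 1) (h : ∀ n i j, ‖(p i - p j) * average 𝕜 p ^ n‖ ≤ K * r ^ n) :
    ∃ C L, (∀ n, ‖L - average 𝕜 p ^ n‖ ≤ C * r ^ n) ∧
      Tendsto (average 𝕜 p ^ ·) atTop (𝓝 L) ∧ ∀ i, p i * L = L := by
  obtain ⟨β, hβ⟩ := Finite.exists_le fun i ↦ ‖p i‖
  obtain ⟨C, hC⟩ := exists_dist_succ_le_geometric (u := (average 𝕜 p ^ ·)) (K := β * K) hr₀
    fun n ↦ mul_assoc β K _ ▸ dist_average_pow_succ_le hp hβ (h n)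
  obtain ⟨L, hL⟩ := cauchySeq_tendsto_of_complete (cauchySeq_of_le_geometric r C hr₁ hC)
  refine ⟨C / (1 - r), L, fun n ↦ ?_, hL, mul_eq_of_tendsto_average_pow hL fun i j ↦ ?_⟩
  · rw [← dist_eq_norm, dist_comm, div_mul_eq_mul_div]
    exact dist_le_of_le_geometric_of_tendsto r C hr₁ hC hL n
  · refine squeeze_zero_norm (h · i j) ?_
    simpa using (tendsto_pow_atTop_nhds_zero_of_lt_one hr₀.le hr₁).const_mul K

end Convergence

section Operators

open Filter Topology

theorem mem_range_iff_apply_eq {R X : Type*} [Semiring R] [AddCommMonoid X] [TopologicalSpace X]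
    [Module R X] {P : X →L[R] X} (hP : IsIdempotentElem P) {x : X} :
    x ∈ Set.range P ↔ P x = x :=
  LinearMap.IsIdempotentElem.mem_range_iff
    (ContinuousLinearMap.isIdempotentElem_toLinearMap_iff.2 hP)

theorem IsCompatibleCorner.of_range_subset {R X : Type*} [Semiring R] [AddCommMonoid X]
    [TopologicalSpace X] [Module R X] {P₁ P₂ Q : X →L[R] X} (hP₁ : IsIdempotentElem P₁)
    (hP₂ : IsIdempotentElem P₂) (hQ : IsIdempotentElem Q)
    (hrange : Set.range Q ⊆ Set.range P₁ ∩ Set.range P₂) (hQ₁ : Q * P₁ = Q) (hQ₂ : Q * P₂ = Q) :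
    IsCompatibleCorner P₁ P₂ Q := by
  have hfix {P : X →L[R] X} (hP : IsIdempotentElem P) (h : Set.range Q ⊆ Set.range P) :
      P * Q = Q := by
    ext x
    exact (mem_range_iff_apply_eq hP).1 (h ⟨x, rfl⟩)
  exact ⟨hQ, hfix hP₁ (hrange.trans Set.inter_subset_left),
    hfix hP₂ (hrange.trans Set.inter_subset_right), hQ₁, hQ₂⟩

theorem isIdempotentElem_and_range_eq_iInter {R X ι : Type*} [Semiring R] [AddCommMonoid X]
    [TopologicalSpace X] [Module R X] {P : ι → X →L[R] X} {L : X →L[R] X}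
    (hP : ∀ i, IsIdempotentElem (P i)) (hPL : ∀ i, P i * L = L)
    (hL : ∀ x, (∀ i, P i x = x) → L x = x) :
    IsIdempotentElem L ∧ Set.range L = ⋂ i, Set.range (P i) := by
  have hPLx (i : ι) (x : X) : P i (L x) = L x := DFunLike.congr_fun (hPL i) x
  refine ⟨ContinuousLinearMap.ext fun x ↦ hL _ (hPLx · x), Set.Subset.antisymm ?_ fun x hx ↦ ?_⟩
  · rintro _ ⟨x, rfl⟩
    exact Set.mem_iInter.2 fun i ↦ ⟨L x, hPLx i x⟩
  · exact ⟨x, hL x fun i ↦ (mem_range_iff_apply_eq (hP i)).1 (Set.mem_iInter.1 hx i)⟩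

variable {𝕜 X ι : Type*} [RCLike 𝕜] [NormedAddCommGroup X] [NormedSpace 𝕜 X] [Fintype ι]

theorem apply_eq_self_of_tendsto_average_pow [Nonempty ι] {P : ι → X →L[𝕜] X} {L : X →L[𝕜] X}
    (hL : Tendsto (average 𝕜 P ^ ·) atTop (𝓝 L)) {x : X} (hx : ∀ i, P i x = x) : L x = x := by
  have hTx : Function.IsFixedPt (⇑(average 𝕜 P)) x := by
    simp only [Function.IsFixedPt, average_apply, hx, average_const]
  have hpow (n : ℕ) : (average 𝕜 P ^ n) x = x := by
    rw [FunLike.coe_pow_eq_iterate]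
    exact hTx.iterate n
  have hLx : Tendsto (fun n : ℕ ↦ (average 𝕜 P ^ n) x) atTop (𝓝 (L x)) :=
    ((ContinuousLinearMap.apply 𝕜 X x).continuous.tendsto L).comp hL
  simp only [hpow] at hLx
  exact tendsto_nhds_unique hLx tendsto_const_nhds

theorem averaged_projections_convergence_of_angles_general [CompleteSpace X] [Nontrivial ι]
    {P : ι → X →L[𝕜] X} {β γ : ℝ} (hP : ∀ i, IsIdempotentElem (P i))
    (hcorner : Pairwise fun i j ↦ ∃ s, IsCompatibleCorner (P i) (P j) s ∧
      cosAngle (P i) (P j) s ≤ γ)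
    (hβ : ∀ i, ‖P i‖ ≤ β) (hγ : γ < 1)
    (hr : contractionRate (Fintype.card ι) β γ < 1) :
    ∃ (r C : ℝ) (Tinf : X →L[𝕜] X), 0 ≤ r ∧ r < 1 ∧ 0 ≤ C ∧
      (∀ n : ℕ, ‖Tinf - average 𝕜 P ^ n‖ ≤ C * r ^ n) ∧
      IsIdempotentElem Tinf ∧ Set.range Tinf = ⋂ i, Set.range (P i) := by
  obtain ⟨i, j, hij⟩ := exists_pair_ne ι
  obtain ⟨s, -, hcos⟩ := hcorner hij
  have hγ₀ : 0 ≤ γ := (norm_nonneg _).trans ((le_max_left _ _).trans hcos)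
  have hβ₀ : 0 ≤ β := (norm_nonneg _).trans (hβ i)
  have hcard : (2 : ℝ) ≤ Fintype.card ι := by exact_mod_cast Fintype.one_lt_card (α := ι)
  have hr₀ := contractionRate_pos hcard hβ₀ hγ₀ hγ
  have hdecay (n : ℕ) (i j : ι) : ‖(P i - P j) * average 𝕜 P ^ n‖
      ≤ 2 * β * contractionRate (Fintype.card ι) β γ ^ n := by
    obtain rfl | hij := eq_or_ne i j
    · rw [sub_self, zero_mul, norm_zero]
      positivity
    · exact norm_sub_mul_average_pow_le hP hβ hcorner hγ₀ hγ n hij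
  obtain ⟨C, L, hC, hL, hPL⟩ := exists_average_pow_geometric_limit hP hr₀ hr hdecay
  exact ⟨_, C, L, hr₀.le, hr, by simpa using (norm_nonneg _).trans (hC 0), hC,
    isIdempotentElem_and_range_eq_iInter hP hPL fun x ↦ apply_eq_self_of_tendsto_average_pow hL⟩

end Operators

/-- Criterion for quick uniform convergence of the averaged projections method via angles between
projections: if each pair `(P i, P j)`, `i < j`, admits a compatible corner projection `Q i j`
with `cos∠(P i, P j) ≤ γ`, `‖P i‖ ≤ β` for all `i`, and `γ, β` satisfy `(8N−11)γ < 1` and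
`(β−1)(N−2+(3N−4)γ) < 1−(8N−11)γ`, then `Tⁿ = ((P₁+⋯+P_N)/N)ⁿ` converges geometrically in
operator norm to a projection onto `⋂ range (P i)`. -/
theorem averaged_projections_convergence_of_angles
    {X : Type*} [NormedAddCommGroup X] [NormedSpace ℂ X] [CompleteSpace X]
    (N : ℕ) (hN : 2 ≤ N) (P : Fin N → X →L[ℂ] X) (Q : Fin N → Fin N → X →L[ℂ] X)
    (hproj : ∀ i, P i ∘L P i = P i)
    (hQproj : ∀ i j : Fin N, i < j → Q i j ∘L Q i j = Q i j)
    (hQrange : ∀ i j : Fin N, i < j → Set.range (Q i j) = Set.range (P i) ∩ Set.range (P j))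
    (hQc₁ : ∀ i j : Fin N, i < j → Q i j ∘L P i = Q i j)
    (hQc₂ : ∀ i j : Fin N, i < j → Q i j ∘L P j = Q i j)
    (γ β : ℝ) (hγ : 0 ≤ γ) (hβ : 0 ≤ β)
    (hcos : ∀ i j : Fin N, i < j →
      max ‖P i ∘L (P j - Q i j)‖ ‖P j ∘L (P i - Q i j)‖ ≤ γ)
    (hPnorm : ∀ i, ‖P i‖ ≤ β)
    (hγsmall : (8 * (N : ℝ) - 11) * γ < 1)
    (hβsmall : (β - 1) * ((N : ℝ) - 2 + (3 * (N : ℝ) - 4) * γ) < 1 - (8 * (N : ℝ) - 11) * γ)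
    (T : X →L[ℂ] X) (hT : T = (N : ℂ)⁻¹ • ∑ i, P i) :
    ∃ (r C : ℝ) (Tinf : X →L[ℂ] X),
      0 ≤ r ∧ r < 1 ∧ 0 ≤ C ∧
      (∀ n : ℕ, ‖Tinf - T ^ n‖ ≤ C * r ^ n) ∧
      Tinf ∘L Tinf = Tinf ∧
      Set.range Tinf = ⋂ i, Set.range (P i) := by
  have : Nontrivial (Fin N) := Fin.nontrivial_iff_two_le.2 hN
  have hcorner : Pairwise fun i j ↦ ∃ s, IsCompatibleCorner (P i) (P j) s ∧
      cosAngle (P i) (P j) s ≤ γ := by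
    have hlt (i j : Fin N) (hij : i < j) : IsCompatibleCorner (P i) (P j) (Q i j) :=
      .of_range_subset (hproj i) (hproj j) (hQproj i j hij) (hQrange i j hij).subset
        (hQc₁ i j hij) (hQc₂ i j hij)
    intro i j hij
    obtain h | h := hij.lt_or_gt
    · exact ⟨Q i j, hlt i j h, hcos i j h⟩
    · exact ⟨Q j i, (hlt j i h).symm, (cosAngle_comm _ _ _).trans_le (hcos j i h)⟩
  have hN₂ : (2 : ℝ) ≤ N := by exact_mod_cast hN
  have hγ₁ : γ < 1 := by nlinarith
  have hr : contractionRate (Fintype.card (Fin N)) β γ < 1 := by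
    rw [Fintype.card_fin]
    exact contractionRate_lt_one hN₂ hγ hγ₁ hγsmall hβsmall
  obtain rfl : T = average ℂ P := by rw [hT, average, Fintype.card_fin]
  exact averaged_projections_convergence_of_angles_general hproj hcorner hPnorm hγ₁ hr
end
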